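/- Let n ≥ 1, m ≥ 1, 1 < p < ∞, s₁,…,s_m > −1, and set λ = (m−1)(n+1) + ∑_{j=1}^m s_j. If f is harmonic on the open set ℍ^m ⊆ ℝ^{m(n+1)} and ∫_{ℍ^m} |f(z₁,…,z_m)|^p t₁^{s₁}⋯t_m^{s_m} dz₁⋯dz_m < ∞, then the trace Tr f(z) = f(z,…,z) satisfies ∫_ℍ |f(z,…,z)|^p t^λ dx dt < ∞, i.e. Tr f ∈ L^p(ℍ, dm_λ). -/

import Mathlib

/-! The proof uses that `|f|ᵖ` satisfies a sub-mean value inequality on balls of `ℍ^m` centred at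
diagonal points, followed by Tonelli's theorem.

*Mean value property.* Let `φ(y) = (1 - |y|²)₊`. For `f` harmonic near a ball around `x`, the
average `∫ f(x + r y) φ(y) dy` does not depend on `r`: its derivative is
`∫ ∇f(x + r y) · y φ(y) dy`, and as `y φ(y)` is a multiple of `∇(φ²)`, integration by parts gives a
multiple of `∫ Δf(x + r y) φ(y)² dy = 0` (`integral_fderiv_mul_radialWeight`). Hence
`f(x) ∫ φ = ∫ f(x + r y) φ(y) dy` (`IsHarmonicOn.mean_value`), and Hölder's inequality yields
`r^N |f(x)|ᵖ ≤ C ∫_{B(x,r)} |f|ᵖ` (`exists_submean`). Balls are those of the sup norm, which contain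
the Euclidean ones carrying `φ`.

*Trace estimate.* Apply this at `(z, …, z)` with `r = t / 2`, where `t` is the height of `z`, and
`N = m (n + 1)`. Every `w` in the ball has all its heights comparable to `t`, so
`t ^ (λ - N) = t ^ (∑ s_j - (n + 1))` is at most a constant times
`∏ w_j ^ s_j * w_{j₀} ^ (-(n + 1))` (`weight_comparison`), where `w_j` stands for the height of the
`j`-th component of `w` and `j₀` is a fixed index. After exchanging the integrals, the `z` that
contribute for a given `w` lie in a ball whose radius is the height `w_{j₀}`; its volume
`(2 w_{j₀}) ^ (n + 1)` cancels the last factor, and the integral of the hypothesis remains.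
-/

open MeasureTheory ENNReal

/-- A real-valued function on `ι → ℝ` is harmonic on an open set `U` if it is `C²` on `U`
and the sum of its unmixed second partial derivatives vanishes identically on `U`. -/
def IsHarmonicOn {ι : Type*} [Fintype ι] [DecidableEq ι]
    (f : (ι → ℝ) → ℝ) (U : Set (ι → ℝ)) : Prop :=
  ContDiffOn ℝ 2 f U ∧
    ∀ x ∈ U, ∑ i, fderiv ℝ (fun y => fderiv ℝ f y (Pi.single i 1)) x (Pi.single i 1) = 0

/-! ### Solid mean value property -/

theorem hasDerivAt_sq_max (s : ℝ) :
    HasDerivAt (fun s : ℝ => (max 0 s) ^ 2) (2 * max 0 s) s := by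
  rcases lt_trichotomy s 0 with h | h | h
  · rw [max_eq_left h.le, mul_zero]
    refine (hasDerivAt_const s (0 : ℝ)).congr_of_eventuallyEq ?_
    filter_upwards [Iio_mem_nhds h] with u hu
    rw [max_eq_left (le_of_lt hu)]; norm_num
  · subst h
    have hd : HasDerivAt (fun u : ℝ => u ^ 2) 0 (0 : ℝ) := by
      simpa using hasDerivAt_pow 2 (0 : ℝ)
    rw [hasDerivAt_iff_isLittleO] at hd ⊢
    refine (Asymptotics.IsBigO.of_norm_le fun u => ?_).trans_isLittleO hd
    rcases le_total u 0 with hu | hu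
    · simp [max_eq_left hu]
      positivity
    · simp [max_eq_right hu]
  · rw [max_eq_right h.le]
    refine HasDerivAt.congr_of_eventuallyEq (f := fun u : ℝ => u ^ 2) ?_ ?_
    · simpa using hasDerivAt_pow 2 s
    · filter_upwards [Ioi_mem_nhds h] with u hu
      rw [max_eq_right (le_of_lt hu)]

section MeanValue

variable {ι : Type*} [Fintype ι]

/-- The squared Euclidean norm on `ι → ℝ` (whose own norm is the sup norm). -/
def sqNorm (y : ι → ℝ) : ℝ := ∑ i, y i ^ 2

/-- The radial weight `(1 - |y|²)₊`, supported in the closed Euclidean unit ball. -/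
noncomputable def radialWeight (y : ι → ℝ) : ℝ := max 0 (1 - sqNorm y)

theorem continuous_radialWeight : Continuous (radialWeight (ι := ι)) := by
  unfold radialWeight sqNorm
  fun_prop

theorem radialWeight_nonneg (y : ι → ℝ) : 0 ≤ radialWeight y := le_max_left _ _

theorem radialWeight_le_one (y : ι → ℝ) : radialWeight y ≤ 1 := by
  have : 0 ≤ sqNorm y := Finset.sum_nonneg fun i _ => sq_nonneg _
  exact max_le zero_le_one (by linarith)

theorem radialWeight_eq_zero {y : ι → ℝ} (hy : 1 ≤ ‖y‖) : radialWeight y = 0 := by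
  refine max_eq_left ?_
  by_contra! h
  have hlt : ‖y‖ < 1 := by
    refine (pi_norm_lt_iff one_pos).2 fun i => ?_
    have h1 : y i ^ 2 ≤ sqNorm y :=
      Finset.single_le_sum (f := fun i => y i ^ 2) (fun i _ => sq_nonneg _) (Finset.mem_univ i)
    rw [Real.norm_eq_abs]
    refine (sq_lt_one_iff₀ (abs_nonneg _)).1 ?_
    rw [sq_abs]; linarith
  linarith

theorem hasCompactSupport_radialWeight : HasCompactSupport (radialWeight (ι := ι)) := by
  refine HasCompactSupport.intro (isCompact_closedBall (0 : ι → ℝ) 1) fun y hy => ?_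
  refine radialWeight_eq_zero ?_
  simp only [Metric.mem_closedBall, dist_zero_right, not_le] at hy
  exact hy.le

theorem integral_radialWeight_pos : 0 < ∫ y : ι → ℝ, radialWeight y := by
  refine continuous_radialWeight.integral_pos_of_hasCompactSupport_nonneg_nonzero
    hasCompactSupport_radialWeight radialWeight_nonneg (x := 0) ?_
  simp [radialWeight, sqNorm]

theorem integrable_mul_radialWeight {u : (ι → ℝ) → ℝ} (hu : Continuous u) :
    Integrable fun y => u y * radialWeight y :=
  (hu.mul continuous_radialWeight).integrable_of_hasCompactSupport
    hasCompactSupport_radialWeight.mul_left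

theorem hasFDerivAt_radialWeight_sq (y : ι → ℝ) :
    HasFDerivAt (fun y : ι → ℝ => radialWeight y ^ 2)
      ((2 * radialWeight y) • -∑ i, (2 * y i) • ContinuousLinearMap.proj (R := ℝ) (φ := fun _ : ι => ℝ) i) y := by
  have hQ : HasFDerivAt (sqNorm (ι := ι))
      (∑ i, (2 * y i) • ContinuousLinearMap.proj (R := ℝ) (φ := fun _ : ι => ℝ) i) y := by
    unfold sqNorm
    refine HasFDerivAt.fun_sum fun i _ => ?_
    simpa using (hasFDerivAt_apply (𝕜 := ℝ) (F' := fun _ : ι => ℝ) i y).pow 2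
  exact (hasDerivAt_sq_max (1 - sqNorm y)).comp_hasFDerivAt y (hQ.const_sub 1)

variable [DecidableEq ι]

theorem fderiv_radialWeight_sq (y : ι → ℝ) (i : ι) :
    fderiv ℝ (fun y : ι → ℝ => radialWeight y ^ 2) y (Pi.single i 1)
      = -4 * (y i * radialWeight y) := by
  rw [(hasFDerivAt_radialWeight_sq y).fderiv]
  simp [Pi.single_apply]
  ring

/-- Write `φ` for `radialWeight`. Since `∇(φ²) = -4 y φ(y)`, integration by parts turns the
`φ`-average of the radial derivative of `F` into an average of `ΔF` over a ball on which it
vanishes. -/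
theorem integral_fderiv_mul_radialWeight {F : (ι → ℝ) → ℝ} (hF : ContDiff ℝ 2 F)
    (x : ι → ℝ) {R r : ℝ} (hr : 0 ≤ r) (hrR : r < R)
    (hΔ : ∀ y ∈ Metric.ball x R,
      ∑ i, fderiv ℝ (fun y => fderiv ℝ F y (Pi.single i 1)) y (Pi.single i 1) = 0) :
    ∫ y, fderiv ℝ F (x + r • y) y * radialWeight y = 0 := by
  have hF1 : ∀ i : ι, ContDiff ℝ 1 (fun y => fderiv ℝ F y (Pi.single i 1)) := fun i =>
    (hF.fderiv_right (m := 1) (by norm_num)).clm_apply contDiff_const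
  have hG1 : ∀ i : ι, ContDiff ℝ 1 (fun y : ι → ℝ => fderiv ℝ F (x + r • y) (Pi.single i 1)) :=
    fun i => (hF1 i).comp (by fun_prop)
  have hGd : ∀ (i : ι) (y : ι → ℝ),
      fderiv ℝ (fun y : ι → ℝ => fderiv ℝ F (x + r • y) (Pi.single i 1)) y (Pi.single i 1)
        = r * fderiv ℝ (fun y => fderiv ℝ F y (Pi.single i 1)) (x + r • y) (Pi.single i 1) := by
    intro i y
    have h1 : HasFDerivAt (fun y : ι → ℝ => x + r • y)
        (r • ContinuousLinearMap.id ℝ (ι → ℝ)) y :=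
      ((hasFDerivAt_id y).const_smul r).const_add x
    have h2 := ((hF1 i).differentiable (by norm_num) (x + r • y)).hasFDerivAt.comp y h1
    have h3 := h2.fderiv
    simp only [Function.comp_def] at h3
    rw [h3]
    simp
  have hΔc : ∀ i : ι, Continuous fun y : ι → ℝ =>
      fderiv ℝ (fun y => fderiv ℝ F y (Pi.single i 1)) (x + r • y) (Pi.single i 1) := fun i =>
    (((hF1 i).continuous_fderiv (by norm_num)).comp (by fun_prop)).clm_apply continuous_const
  have hdec : ∀ y : ι → ℝ, fderiv ℝ F (x + r • y) y * radialWeight y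
      = ∑ i, fderiv ℝ F (x + r • y) (Pi.single i 1) * (y i * radialWeight y) := by
    intro y
    have hy : fderiv ℝ F (x + r • y) y
        = ∑ i, y i * fderiv ℝ F (x + r • y) (Pi.single i 1) := by
      have h := congrArg (fderiv ℝ F (x + r • y)) (pi_eq_sum_univ' y)
      simpa only [map_sum, map_smul, smul_eq_mul] using h
    rw [hy, Finset.sum_mul]
    exact Finset.sum_congr rfl fun i _ => by ring
  have hint : ∀ i : ι, Integrable fun y : ι → ℝ =>
      fderiv ℝ F (x + r • y) (Pi.single i 1) * (y i * radialWeight y) := fun i => by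
    simpa only [mul_assoc, Pi.mul_apply] using
      integrable_mul_radialWeight ((hG1 i).continuous.mul (continuous_apply i))
  have hint2 : ∀ i : ι, Integrable fun y : ι → ℝ =>
      (r * fderiv ℝ (fun y => fderiv ℝ F y (Pi.single i 1)) (x + r • y) (Pi.single i 1))
        * radialWeight y ^ 2 := fun i => by
    simpa only [mul_assoc, pow_two, Pi.mul_apply] using
      integrable_mul_radialWeight ((continuous_const (y := r)).mul (hΔc i) |>.mul
        continuous_radialWeight)
  have hibp : ∀ i : ι,
      ∫ y : ι → ℝ, fderiv ℝ F (x + r • y) (Pi.single i 1) * (y i * radialWeight y)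
        = (1 / 4) * ∫ y : ι → ℝ,
        (r * fderiv ℝ (fun y => fderiv ℝ F y (Pi.single i 1)) (x + r • y) (Pi.single i 1))
          * radialWeight y ^ 2 := by
    intro i
    have h := integral_mul_fderiv_eq_neg_fderiv_mul_of_integrable (μ := (volume : Measure (ι → ℝ)))
      (f := fun y : ι → ℝ => fderiv ℝ F (x + r • y) (Pi.single i 1))
      (g := fun y : ι → ℝ => radialWeight y ^ 2) (v := Pi.single i 1) ?_ ?_ ?_
      (fun y _ => (hG1 i).differentiable (by norm_num) y)
      (fun y _ => (hasFDerivAt_radialWeight_sq y).differentiableAt)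
    · simp only [fderiv_radialWeight_sq, hGd] at h
      have h' : ∫ y : ι → ℝ, fderiv ℝ F (x + r • y) (Pi.single i 1)
          * (-4 * (y i * radialWeight y)) = -4 * ∫ y : ι → ℝ,
            fderiv ℝ F (x + r • y) (Pi.single i 1) * (y i * radialWeight y) := by
        rw [← integral_const_mul]
        congr 1; ext y; ring
      rw [h'] at h
      linarith
    · simp only [hGd]; exact hint2 i
    · simp only [fderiv_radialWeight_sq]
      refine ((hint i).const_mul (-4)).congr (Filter.Eventually.of_forall fun y => ?_)
      simp only; ring
    · simpa only [mul_assoc, pow_two, Pi.mul_apply] using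
        integrable_mul_radialWeight ((hG1 i).continuous.mul continuous_radialWeight)
  simp only [hdec]
  rw [integral_finsetSum _ fun i _ => hint i]
  simp only [hibp]
  rw [← Finset.mul_sum, ← integral_finsetSum _ fun i _ => hint2 i]
  have hz : ∀ y : ι → ℝ, ∑ i, (r * fderiv ℝ (fun y => fderiv ℝ F y (Pi.single i 1))
      (x + r • y) (Pi.single i 1)) * radialWeight y ^ 2 = 0 := by
    intro y
    rw [← Finset.sum_mul, ← Finset.mul_sum]
    by_cases hy : 1 ≤ ‖y‖
    · rw [radialWeight_eq_zero hy]; simp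
    · rw [hΔ]
      · simp
      · rw [mem_ball_iff_norm, add_sub_cancel_left, norm_smul, Real.norm_eq_abs, abs_of_nonneg hr]
        push Not at hy
        nlinarith [norm_nonneg y]
  simp [hz]

/-- The weighted average over the ball of radius `r` has zero derivative in `r`, and equals the
value at the centre times the total mass when `r = 0`. -/
theorem mean_value_of_contDiff {F : (ι → ℝ) → ℝ} (hF : ContDiff ℝ 2 F)
    (hc : HasCompactSupport F) (x : ι → ℝ) {R r : ℝ} (hr : 0 ≤ r) (hrR : r < R)
    (hΔ : ∀ y ∈ Metric.ball x R,
      ∑ i, fderiv ℝ (fun y => fderiv ℝ F y (Pi.single i 1)) y (Pi.single i 1) = 0) :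
    ∫ y, F (x + r • y) * radialWeight y = F x * ∫ y : ι → ℝ, radialWeight y := by
  have hF1 : Continuous (fderiv ℝ F) := hF.continuous_fderiv (by norm_num)
  obtain ⟨C, hC⟩ := hF1.bounded_above_of_compact_support (hc.fderiv ℝ)
  have hmeas : ∀ s : ℝ, Continuous fun y : ι → ℝ => F (x + s • y) := fun s =>
    hF.continuous.comp (by fun_prop)
  have hderiv : ∀ s : ℝ, HasDerivAt (fun s : ℝ => ∫ y, F (x + s • y) * radialWeight y)
      (∫ y, fderiv ℝ F (x + s • y) y * radialWeight y) s := by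
    intro s
    refine (hasDerivAt_integral_of_dominated_loc_of_deriv_le (s := Set.univ)
      (F := fun (s : ℝ) (y : ι → ℝ) => F (x + s • y) * radialWeight y)
      (F' := fun (s : ℝ) (y : ι → ℝ) => fderiv ℝ F (x + s • y) y * radialWeight y)
      (bound := fun y => C * radialWeight y)
      Filter.univ_mem
      (Filter.Eventually.of_forall fun s =>
        (integrable_mul_radialWeight (hmeas s)).aestronglyMeasurable)
      (integrable_mul_radialWeight (hmeas s)) ?_ ?_
      (integrable_mul_radialWeight continuous_const) ?_).2
    · exact (integrable_mul_radialWeight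
        ((hF1.comp (by fun_prop)).clm_apply continuous_id)).aestronglyMeasurable
    · refine Filter.Eventually.of_forall fun y s _ => ?_
      by_cases hy : 1 ≤ ‖y‖
      · rw [radialWeight_eq_zero hy]; simp
      · push Not at hy
        rw [norm_mul, Real.norm_eq_abs (radialWeight y), abs_of_nonneg (radialWeight_nonneg y)]
        refine mul_le_mul_of_nonneg_right ?_ (radialWeight_nonneg y)
        refine (ContinuousLinearMap.le_opNorm _ _).trans ?_
        calc ‖fderiv ℝ F (x + s • y)‖ * ‖y‖ ≤ ‖fderiv ℝ F (x + s • y)‖ * 1 := by gcongr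
          _ ≤ C := by simpa using hC _
    · refine Filter.Eventually.of_forall fun y s _ => ?_
      have h1 : HasDerivAt (fun s : ℝ => x + s • y) y s := by
        simpa using ((hasDerivAt_id s).smul_const y).const_add x
      exact ((hF.differentiable (by norm_num) (x + s • y)).hasFDerivAt.comp_hasDerivAt s h1).mul_const _
  have hconst := constant_of_has_deriv_right_zero
    (f := fun s : ℝ => ∫ y, F (x + s • y) * radialWeight y) (a := 0) (b := r)
    (fun s _ => (hderiv s).continuousAt.continuousWithinAt)
    (fun s hs => by
      have h := hderiv s
      rw [integral_fderiv_mul_radialWeight hF x hs.1 (hs.2.trans hrR) hΔ] at h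
      exact h.hasDerivWithinAt) r ⟨hr, le_rfl⟩
  simp only [zero_smul, add_zero] at hconst
  rw [hconst, integral_const_mul]

/-- Solid mean value property of harmonic functions on an open set, reduced by a smooth cutoff to
globally defined, compactly supported functions. -/
theorem IsHarmonicOn.mean_value {f : (ι → ℝ) → ℝ} {U : Set (ι → ℝ)} (hf : IsHarmonicOn f U)
    (hU : IsOpen U) (x : ι → ℝ) {r ρ : ℝ} (hr : 0 ≤ r) (hrρ : r < ρ)
    (hball : Metric.ball x ρ ⊆ U) :
    ∫ y, f (x + r • y) * radialWeight y = f x * ∫ y : ι → ℝ, radialWeight y := by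
  let χ : ContDiffBump x :=
    { rIn := (r + ρ) / 2
      rOut := (r + 3 * ρ) / 4
      rIn_pos := by linarith
      rIn_lt_rOut := by linarith }
  have hIn : χ.rIn = (r + ρ) / 2 := rfl
  have hOut : χ.rOut = (r + 3 * ρ) / 4 := rfl
  have hF : ContDiff ℝ 2 fun y => χ y * f y := by
    rw [contDiff_iff_contDiffAt]
    intro y
    by_cases hy : y ∈ Metric.ball x ρ
    · exact χ.contDiffAt.mul (hf.1.contDiffAt (hU.mem_nhds (hball hy)))
    · have hz : (fun y => χ y * f y) =ᶠ[nhds y] fun _ => 0 := by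
        have hy' : y ∈ (Metric.closedBall x χ.rOut)ᶜ := fun h =>
          hy (Metric.closedBall_subset_ball (by rw [hOut]; linarith) h)
        filter_upwards [Metric.isClosed_closedBall.isOpen_compl.mem_nhds hy'] with u hu
        simp only [Set.mem_compl_iff, Metric.mem_closedBall, not_le] at hu
        rw [χ.zero_of_le_dist hu.le, zero_mul]
      exact (contDiffAt_const (c := (0 : ℝ))).congr_of_eventuallyEq hz
  have heq : ∀ y ∈ Metric.ball x χ.rIn, (fun y => χ y * f y) =ᶠ[nhds y] f := by
    intro y hy
    filter_upwards [χ.eventuallyEq_one_of_mem_ball hy] with u hu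
    simp [hu]
  have hrIn : r < χ.rIn := by rw [hIn]; linarith
  have hcs : HasCompactSupport fun y => χ y * f y := χ.hasCompactSupport.mul_right
  have key := mean_value_of_contDiff hF hcs x hr hrIn (by
    intro y hy
    have h0 := hf.2 y (hball (Metric.ball_subset_ball (by rw [hIn]; linarith) hy))
    rw [← h0]
    refine Finset.sum_congr rfl fun i _ => ?_
    congr 1
    refine Filter.EventuallyEq.fderiv_eq ?_
    filter_upwards [(heq y hy).fderiv (𝕜 := ℝ)] with u hu
    rw [hu])
  rw [(heq x (Metric.mem_ball_self (hr.trans_lt hrIn))).eq_of_nhds] at key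
  rw [← key]
  congr 1; ext y
  by_cases hy : 1 ≤ ‖y‖
  · rw [radialWeight_eq_zero hy]; simp
  · have hm : x + r • y ∈ Metric.ball x χ.rIn := by
      rw [mem_ball_iff_norm, add_sub_cancel_left, norm_smul, Real.norm_eq_abs, abs_of_nonneg hr]
      push Not at hy
      nlinarith [norm_nonneg y]
    have := (heq _ hm).eq_of_nhds
    rw [this]

end MeanValue

/-! ### Sub-mean value property of the power -/

section SubMean

variable {ι : Type*} [Fintype ι]

theorem lintegral_ball_rescale (g : (ι → ℝ) → ℝ≥0∞) (x : ι → ℝ) {r : ℝ} (hr : 0 < r) :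
    ENNReal.ofReal (r ^ Fintype.card ι) * ∫⁻ y in Metric.ball 0 1, g (x + r • y)
      = ∫⁻ w in Metric.ball x r, g w := by
  have h1 : ∫⁻ y in Metric.ball 0 1, g (x + r • y)
      = ∫⁻ y, (Metric.ball x r).indicator g (x + r • y) := by
    rw [← lintegral_indicator Metric.isOpen_ball.measurableSet]
    congr 1; ext y
    have hiff : y ∈ Metric.ball (0 : ι → ℝ) 1 ↔ x + r • y ∈ Metric.ball x r := by
      rw [mem_ball_iff_norm, mem_ball_iff_norm, add_sub_cancel_left, sub_zero, norm_smul,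
        Real.norm_eq_abs, abs_of_pos hr]
      constructor <;> intro h <;> nlinarith
    by_cases hy : y ∈ Metric.ball (0 : ι → ℝ) 1
    · rw [Set.indicator_of_mem hy, Set.indicator_of_mem (hiff.1 hy)]
    · rw [Set.indicator_of_notMem hy, Set.indicator_of_notMem (fun h => hy (hiff.2 h))]
  have h2 : ∫⁻ y, (Metric.ball x r).indicator g (x + r • y)
      = ENNReal.ofReal |(r ^ Fintype.card ι)⁻¹| * ∫⁻ w in Metric.ball x r, g w := by
    have hm := (Homeomorph.smulOfNeZero (α := ι → ℝ) r hr.ne').measurableEmbedding.lintegral_map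
      (μ := volume) (fun w => (Metric.ball x r).indicator g (x + w))
    have he : (Homeomorph.smulOfNeZero (α := ι → ℝ) r hr.ne' : (ι → ℝ) → ι → ℝ) = (r • ·) := rfl
    rw [he, Measure.map_addHaar_smul _ hr.ne', lintegral_smul_measure,
      lintegral_add_left_eq_self (fun w => (Metric.ball x r).indicator g w) x,
      lintegral_indicator Metric.isOpen_ball.measurableSet, Module.finrank_fintype_fun_eq_card] at hm
    exact hm.symm
  have hpos : 0 < r ^ Fintype.card ι := pow_pos hr _
  rw [h1, h2, ← mul_assoc, ← ENNReal.ofReal_mul hpos.le, abs_of_pos (inv_pos.2 hpos),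
    mul_inv_cancel₀ hpos.ne', ENNReal.ofReal_one, one_mul]

/-- Sub-mean value property of `|f|ᵖ`, with a constant independent of the harmonic function, the
centre and the radius: the mean value property followed by Hölder's inequality. -/
theorem exists_submean [DecidableEq ι] {p : ℝ} (hp : 1 ≤ p) :
    ∃ C : ℝ≥0∞, C ≠ ⊤ ∧ ∀ (f : (ι → ℝ) → ℝ) (U : Set (ι → ℝ)), IsOpen U → IsHarmonicOn f U →
      ∀ (x : ι → ℝ) (r ρ : ℝ), 0 < r → r < ρ → Metric.ball x ρ ⊆ U →
        ENNReal.ofReal (r ^ Fintype.card ι) * ENNReal.ofReal (|f x| ^ p)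
          ≤ C * ∫⁻ w in Metric.ball x r, ENNReal.ofReal (|f w| ^ p) := by
  have hp0 : 0 < p := by linarith
  set c : ℝ := ∫ y : ι → ℝ, radialWeight y with hc
  have hcpos : 0 < c := integral_radialWeight_pos
  set V : ℝ≥0∞ := volume (Metric.ball (0 : ι → ℝ) 1) with hV
  have hVtop : V ≠ ⊤ := measure_ball_lt_top.ne
  have hcp0 : ENNReal.ofReal c ^ p ≠ 0 := by
    simp [ENNReal.rpow_eq_zero_iff, hcpos, hp0]
  have hcpt : ENNReal.ofReal c ^ p ≠ ⊤ := ENNReal.rpow_ne_top_of_nonneg hp0.le ENNReal.ofReal_ne_top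
  refine ⟨(ENNReal.ofReal c ^ p)⁻¹ * (V ^ (1 / 1 - 1 / p)) ^ p,
    ENNReal.mul_ne_top (ENNReal.inv_ne_top.2 hcp0) (ENNReal.rpow_ne_top_of_nonneg hp0.le
      (ENNReal.rpow_ne_top_of_nonneg ?_ hVtop)), ?_⟩
  · have : 1 / p ≤ 1 := by rw [div_le_one hp0]; exact hp
    linarith
  intro f U hU hf x r ρ hr hrρ hball
  have hconv : ∀ a : ℝ, ENNReal.ofReal (|a| ^ p) = ‖a‖ₑ ^ p := fun a => by
    rw [← ENNReal.ofReal_rpow_of_nonneg (abs_nonneg a) hp0.le, Real.enorm_eq_ofReal_abs]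
  simp only [hconv]
  have hmv := hf.mean_value hU x hr.le hrρ hball
  have hle : ‖f x‖ₑ * ENNReal.ofReal c ≤ ∫⁻ y in Metric.ball 0 1, ‖f (x + r • y)‖ₑ := by
    calc ‖f x‖ₑ * ENNReal.ofReal c = ‖∫ y, f (x + r • y) * radialWeight y‖ₑ := by
          rw [hmv, enorm_mul, Real.enorm_of_nonneg hcpos.le]
      _ ≤ ∫⁻ y, ‖f (x + r • y) * radialWeight y‖ₑ := enorm_integral_le_lintegral_enorm _
      _ ≤ ∫⁻ y, (Metric.ball 0 1).indicator (fun y => ‖f (x + r • y)‖ₑ) y := by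
          refine lintegral_mono fun y => ?_
          by_cases hy : y ∈ Metric.ball (0 : ι → ℝ) 1
          · rw [Set.indicator_of_mem hy, enorm_mul, Real.enorm_of_nonneg (radialWeight_nonneg y)]
            calc ‖f (x + r • y)‖ₑ * ENNReal.ofReal (radialWeight y)
                ≤ ‖f (x + r • y)‖ₑ * 1 := by
                  gcongr
                  exact ENNReal.ofReal_le_one.2 (radialWeight_le_one y)
              _ = _ := mul_one _
          · rw [radialWeight_eq_zero (by simpa using hy)]
            simp
      _ = _ := lintegral_indicator Metric.isOpen_ball.measurableSet _
  have hcont : ContinuousOn (fun y : ι → ℝ => f (x + r • y)) (Metric.ball 0 1) := by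
    refine hf.1.continuousOn.comp (by fun_prop) fun y hy => hball ?_
    rw [mem_ball_iff_norm, add_sub_cancel_left, norm_smul, Real.norm_eq_abs, abs_of_pos hr]
    rw [mem_ball_zero_iff] at hy
    nlinarith
  have hH := eLpNorm'_le_eLpNorm'_mul_rpow_measure_univ one_pos hp
    (hcont.aestronglyMeasurable (μ := volume) Metric.isOpen_ball.measurableSet)
  simp only [eLpNorm', Measure.restrict_apply_univ, ENNReal.rpow_one, div_one] at hH
  have h3 := ENNReal.rpow_le_rpow (hle.trans hH) hp0.le
  rw [ENNReal.mul_rpow_of_nonneg _ _ hp0.le, ENNReal.mul_rpow_of_nonneg _ _ hp0.le,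
    ← ENNReal.rpow_mul, one_div_mul_cancel hp0.ne', ENNReal.rpow_one] at h3
  rw [← lintegral_ball_rescale _ x hr]
  have h4 : ‖f x‖ₑ ^ p = (ENNReal.ofReal c ^ p)⁻¹ * (‖f x‖ₑ ^ p * ENNReal.ofReal c ^ p) := by
    rw [mul_comm, mul_assoc, ENNReal.mul_inv_cancel hcp0 hcpt, mul_one]
  rw [h4]
  calc _ ≤ ENNReal.ofReal (r ^ Fintype.card ι) * ((ENNReal.ofReal c ^ p)⁻¹ *
        ((∫⁻ y in Metric.ball 0 1, ‖f (x + r • y)‖ₑ ^ p) * (V ^ (1 - 1 / p)) ^ p)) := by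
        gcongr
    _ = _ := by rw [div_one]; ring

end SubMean

/-! ### Comparison of weights and the trace estimate -/

theorem rpow_le_two_rpow_abs_mul {t w : ℝ} (ht : 0 < t) (hw : 0 < w) (h1 : t ≤ 2 * w)
    (h2 : w ≤ 2 * t) (s : ℝ) : t ^ s ≤ 2 ^ |s| * w ^ s := by
  rcases le_or_gt 0 s with hs | hs
  · rw [abs_of_nonneg hs, ← Real.mul_rpow (by norm_num) hw.le]
    exact Real.rpow_le_rpow ht.le h1 hs
  · rw [abs_of_neg hs]
    calc t ^ s ≤ (w / 2) ^ s :=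
          Real.rpow_le_rpow_of_nonpos (by positivity) (by linarith) hs.le
      _ = _ := by
          rw [Real.div_rpow hw.le (by norm_num), Real.rpow_neg (by norm_num)]
          ring

/-- On the ball of radius `t / 2` about a diagonal point all heights are comparable to `t`, so the
weight `t ^ λ`, divided by the volume scale of the ball, is controlled by the product weight. -/
theorem weight_comparison {m n : ℕ} (j₀ : Fin m) (s w : Fin m → ℝ) {t : ℝ} (ht : 0 < t)
    (h1 : ∀ j, t / 2 < w j) (h2 : ∀ j, w j < 2 * t) :
    t ^ (((m : ℝ) - 1) * ((n : ℝ) + 1) + ∑ j, s j) ≤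
      (t / 2) ^ (m * (n + 1)) * ((2 ^ (m * (n + 1)) * (∏ j, 2 ^ |s j|) * 2 ^ (n + 1)) *
        ((∏ j, w j ^ s j) * (w j₀ ^ (n + 1))⁻¹)) := by
  have hw : ∀ j, 0 < w j := fun j => by linarith [h1 j]
  have e1 : t ^ (((m : ℝ) - 1) * ((n : ℝ) + 1) + ∑ j, s j)
      = t ^ (m * (n + 1)) * ((∏ j, t ^ s j) * (t ^ (n + 1))⁻¹) := by
    have : ((m : ℝ) - 1) * ((n : ℝ) + 1) + ∑ j, s j
        = ((m * (n + 1) : ℕ) : ℝ) + (∑ j, s j + -((n + 1 : ℕ) : ℝ)) := by push_cast; ring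
    rw [this, Real.rpow_add ht, Real.rpow_natCast, Real.rpow_add ht, Real.rpow_neg ht.le,
      Real.rpow_natCast, Real.rpow_sum_of_pos ht]
  have e2 : ∏ j, t ^ s j ≤ (∏ j, (2 : ℝ) ^ |s j|) * ∏ j, w j ^ s j := by
    rw [← Finset.prod_mul_distrib]
    refine Finset.prod_le_prod (fun j _ => by positivity) fun j _ => ?_
    exact rpow_le_two_rpow_abs_mul ht (hw j) (by linarith [h1 j]) (h2 j).le _
  have e3 : (t ^ (n + 1))⁻¹ ≤ 2 ^ (n + 1) * (w j₀ ^ (n + 1))⁻¹ := by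
    have hw0 := hw j₀
    rw [← div_eq_mul_inv, le_div_iff₀ (by positivity), inv_mul_le_iff₀ (by positivity), ← mul_pow]
    exact pow_le_pow_left₀ hw0.le (by linarith [h2 j₀]) _
  have hP : 0 ≤ ∏ j, w j ^ s j := Finset.prod_nonneg fun j _ => (Real.rpow_nonneg (hw j).le _)
  rw [e1, div_pow]
  calc _ ≤ t ^ (m * (n + 1)) * (((∏ j, (2 : ℝ) ^ |s j|) * ∏ j, w j ^ s j) *
        (2 ^ (n + 1) * (w j₀ ^ (n + 1))⁻¹)) := by gcongr
    _ = _ := by field_simp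

/-- if `f` is harmonic on `ℍ^m ⊆ ℝ^{m(n+1)}` and belongs to the weighted Bergman
space `A^p_{s⃗}(ℍ^m)` with `1 < p < ∞`, `s_j > −1`, then its trace `z ↦ f(z,…,z)` lies in
`L^p(ℍ, dm_λ)` where `λ = (m−1)(n+1) + ∑ s_j`.  Points of `ℍ ⊆ ℝ^{n+1}` are indexed by
`Fin (n+1)`, the last coordinate being the height `t > 0`; points of `ℍ^m` are indexed by
`Fin m × Fin (n+1)`. -/
theorem trace_harmonic_bergman_pGtOne
    (n m : ℕ) (hn : 1 ≤ n) (hm : 1 ≤ m) (p : ℝ) (hp : 1 < p)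
    (s : Fin m → ℝ) (hs : ∀ j, -1 < s j)
    (f : ((Fin m × Fin (n + 1)) → ℝ) → ℝ)
    (hharm : IsHarmonicOn f {z | ∀ i : Fin m, 0 < z (i, Fin.last n)})
    (hint : ∫⁻ z in {z : (Fin m × Fin (n + 1)) → ℝ | ∀ i : Fin m, 0 < z (i, Fin.last n)},
        ENNReal.ofReal (|f z| ^ p * ∏ j : Fin m, z (j, Fin.last n) ^ s j) < ⊤) :
    ∫⁻ z in {z : Fin (n + 1) → ℝ | 0 < z (Fin.last n)},
        ENNReal.ofReal (|f (fun q => z q.2)| ^ p *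
          z (Fin.last n) ^ (((m : ℝ) - 1) * ((n : ℝ) + 1) + ∑ j : Fin m, s j)) < ⊤ := by
  have hp0 : 0 < p := by linarith
  set U : Set ((Fin m × Fin (n + 1)) → ℝ) := {z | ∀ i : Fin m, 0 < z (i, Fin.last n)} with hUdef
  have hU : IsOpen U := by
    simp only [hUdef, Set.ofPred_forall]
    exact isOpen_iInter_of_finite fun i => isOpen_lt continuous_const (continuous_apply _)
  let j₀ : Fin m := ⟨0, hm⟩
  obtain ⟨C, hC, hsub⟩ := exists_submean (ι := Fin m × Fin (n + 1)) hp.le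
  have hcard : Fintype.card (Fin m × Fin (n + 1)) = m * (n + 1) := by simp
  rw [hcard] at hsub
  set A : ℝ := 2 ^ (m * (n + 1)) * (∏ j, 2 ^ |s j|) * 2 ^ (n + 1) with hA
  have hA0 : 0 ≤ A := by positivity
  -- `G` is the integrand of the hypothesis. For fixed `w`, every `z` whose ball contains `w` lies in
  -- the `z`-section of `B` at `w`, a ball around the `j₀`-th component of `w` with volume
  -- `2 ^ (n + 1) / D w`.
  set G : ((Fin m × Fin (n + 1)) → ℝ) → ℝ≥0∞ := fun w =>
    ENNReal.ofReal (|f w| ^ p * ∏ j : Fin m, w (j, Fin.last n) ^ s j) with hG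
  set D : ((Fin m × Fin (n + 1)) → ℝ) → ℝ≥0∞ := fun w =>
    ENNReal.ofReal ((w (j₀, Fin.last n) ^ (n + 1))⁻¹) with hD
  let B : Set ((Fin (n + 1) → ℝ) × ((Fin m × Fin (n + 1)) → ℝ)) :=
    {q | dist q.1 (fun k => q.2 (j₀, k)) < q.2 (j₀, Fin.last n)}
  have hB : MeasurableSet B :=
    (isOpen_lt (by fun_prop) (by fun_prop)).measurableSet
  have hBz : ∀ z w, (z, w) ∈ B ↔ z ∈ Metric.ball (fun k => w (j₀, k)) (w (j₀, Fin.last n)) :=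
    fun z w => Iff.rfl
  -- Sub-mean value property on the ball of radius `t / 2` about the diagonal point `(z, …, z)`,
  -- combined with the weight comparison and enlarged to `U ∩ {w | (z, w) ∈ B}`.
  have hpt : ∀ z : Fin (n + 1) → ℝ, 0 < z (Fin.last n) →
      ENNReal.ofReal (|f (fun q => z q.2)| ^ p *
          z (Fin.last n) ^ (((m : ℝ) - 1) * ((n : ℝ) + 1) + ∑ j : Fin m, s j))
        ≤ C * ENNReal.ofReal A * ∫⁻ w in U, B.indicator (fun _ => (1 : ℝ≥0∞)) (z, w) * (G w * D w) := by
    intro z hz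
    set t := z (Fin.last n) with ht
    set x : (Fin m × Fin (n + 1)) → ℝ := fun q => z q.2 with hx
    have hheight : ∀ {ρ : ℝ} {w : (Fin m × Fin (n + 1)) → ℝ}, w ∈ Metric.ball x ρ →
        ∀ q, |w q - z q.2| < ρ := by
      intro ρ w hw q
      have := (dist_le_pi_dist w x q).trans_lt (Metric.mem_ball.1 hw)
      rwa [Real.dist_eq] at this
    have hballU : Metric.ball x t ⊆ U := fun w hw i => by
      have := (abs_lt.1 (hheight hw (i, Fin.last n))).1
      simp only at this
      linarith
    have hsm := hsub f U hU hharm x (t / 2) t (by positivity) (by linarith) hballU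
    have hr0 : ENNReal.ofReal ((t / 2) ^ (m * (n + 1))) ≠ 0 := by
      rw [Ne, ENNReal.ofReal_eq_zero, not_le]; positivity
    rw [← ENNReal.mul_le_mul_iff_right hr0 ENNReal.ofReal_ne_top, ENNReal.ofReal_mul (by positivity),
      ← mul_assoc]
    set T := ENNReal.ofReal (t ^ (((m : ℝ) - 1) * ((n : ℝ) + 1) + ∑ j : Fin m, s j)) with hT
    calc _ ≤ (C * ∫⁻ w in Metric.ball x (t / 2), ENNReal.ofReal (|f w| ^ p)) * T := by gcongr
      _ = C * ∫⁻ w in Metric.ball x (t / 2), ENNReal.ofReal (|f w| ^ p) * T := by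
          rw [mul_assoc, lintegral_mul_const' _ _ ENNReal.ofReal_ne_top]
      _ ≤ C * ∫⁻ w in Metric.ball x (t / 2), ENNReal.ofReal ((t / 2) ^ (m * (n + 1))) *
            (ENNReal.ofReal A * (B.indicator (fun _ => (1 : ℝ≥0∞)) (z, w) * (G w * D w))) := by
          gcongr 1
          refine setLIntegral_mono' Metric.isOpen_ball.measurableSet fun w hw => ?_
          have hq := hheight hw
          have h1 : ∀ j, t / 2 < w (j, Fin.last n) := fun j => by
            have := (abs_lt.1 (hq (j, Fin.last n))).1
            simp only at this
            linarith
          have h2 : ∀ j, w (j, Fin.last n) < 2 * t := fun j => by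
            have := (abs_lt.1 (hq (j, Fin.last n))).2
            simp only at this
            linarith
          have hw0 : 0 < w (j₀, Fin.last n) := by linarith [h1 j₀]
          have hzB : (z, w) ∈ B := by
            rw [hBz, Metric.mem_ball, dist_pi_lt_iff hw0]
            intro k
            rw [dist_comm, Real.dist_eq]
            exact (hq (j₀, k)).trans (h1 j₀)
          have hPn : 0 ≤ ∏ j : Fin m, w (j, Fin.last n) ^ s j :=
            Finset.prod_nonneg fun j _ => Real.rpow_nonneg (by linarith [h1 j]) _
          rw [Set.indicator_of_mem hzB, one_mul, hT, hG, hD]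
          simp only
          rw [← ENNReal.ofReal_mul (by positivity), ← ENNReal.ofReal_mul (by positivity),
            ← ENNReal.ofReal_mul hA0, ← ENNReal.ofReal_mul (by positivity)]
          refine ENNReal.ofReal_le_ofReal ?_
          calc _ ≤ |f w| ^ p * _ := mul_le_mul_of_nonneg_left
                (weight_comparison (n := n) j₀ s (fun j => w (j, Fin.last n)) hz h1 h2)
                (by positivity)
            _ = _ := by ring
      _ ≤ C * ∫⁻ w in U, ENNReal.ofReal ((t / 2) ^ (m * (n + 1))) *
            (ENNReal.ofReal A * (B.indicator (fun _ => (1 : ℝ≥0∞)) (z, w) * (G w * D w))) := by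
          gcongr 1
          exact lintegral_mono_set
            ((Metric.ball_subset_ball (by linarith)).trans hballU)
      _ = _ := by
          rw [lintegral_const_mul' _ _ ENNReal.ofReal_ne_top,
            lintegral_const_mul' _ _ ENNReal.ofReal_ne_top]
          ring
  have hfm : AEMeasurable f (volume.restrict U) :=
    hharm.1.continuousOn.aemeasurable hU.measurableSet
  have hGDm : AEMeasurable (fun w => G w * D w) (volume.restrict U) := by
    refine AEMeasurable.mul (AEMeasurable.ennreal_ofReal (AEMeasurable.mul ?_ ?_)) ?_
    · exact (continuous_abs.measurable.comp_aemeasurable hfm).pow_const p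
    · refine Measurable.aemeasurable ?_
      exact Finset.measurable_prod _ fun j _ => (measurable_pi_apply _).pow_const _
    · refine Measurable.aemeasurable ?_
      exact (((measurable_pi_apply _).pow_const _).inv).ennreal_ofReal
  calc _ ≤ ∫⁻ z in {z : Fin (n + 1) → ℝ | 0 < z (Fin.last n)}, C * ENNReal.ofReal A *
          ∫⁻ w in U, B.indicator (fun _ => (1 : ℝ≥0∞)) (z, w) * (G w * D w) :=
        setLIntegral_mono'
          (isOpen_lt continuous_const (continuous_apply _)).measurableSet hpt
    _ ≤ ∫⁻ z, C * ENNReal.ofReal A *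
          ∫⁻ w in U, B.indicator (fun _ => (1 : ℝ≥0∞)) (z, w) * (G w * D w) :=
        setLIntegral_le_lintegral _ _
    _ = C * ENNReal.ofReal A *
          ∫⁻ z, ∫⁻ w in U, B.indicator (fun _ => (1 : ℝ≥0∞)) (z, w) * (G w * D w) :=
        lintegral_const_mul' _ _ (ENNReal.mul_ne_top hC ENNReal.ofReal_ne_top)
    _ = C * ENNReal.ofReal A *
          ∫⁻ w in U, ∫⁻ z, B.indicator (fun _ => (1 : ℝ≥0∞)) (z, w) * (G w * D w) := by
        rw [lintegral_lintegral_swap]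
        exact (measurable_const.indicator hB).aemeasurable.mul hGDm.comp_snd
    _ = C * ENNReal.ofReal A * ∫⁻ w in U, 2 ^ (n + 1) * G w := by
        congr 1
        refine setLIntegral_congr_fun hU.measurableSet fun w hw => ?_
        have hw0 : 0 < w (j₀, Fin.last n) := hw j₀
        have hind : ∀ z, B.indicator (fun _ => (1 : ℝ≥0∞)) (z, w)
            = (Metric.ball (fun k => w (j₀, k)) (w (j₀, Fin.last n))).indicator
              (fun _ => (1 : ℝ≥0∞)) z := fun z => rfl
        simp only [hind]
        rw [lintegral_mul_const _ (measurable_const.indicator Metric.isOpen_ball.measurableSet),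
          lintegral_indicator Metric.isOpen_ball.measurableSet, setLIntegral_const, one_mul,
          Real.volume_pi_ball _ hw0, Fintype.card_fin, mul_left_comm, ← ENNReal.ofReal_mul (by positivity)]
        rw [mul_pow, mul_assoc, mul_inv_cancel₀ (by positivity), mul_one, mul_comm,
          ENNReal.ofReal_pow (by norm_num)]
        simp
    _ < ⊤ := by
        rw [lintegral_const_mul' _ _ (by simp)]
        exact ENNReal.mul_lt_top (ENNReal.mul_lt_top hC.lt_top ENNReal.ofReal_lt_top)
          (ENNReal.mul_lt_top (by simp) hint)
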